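/- Let λ > 0 and β ∈ (0,1]. For every n ∈ ℕ₀, ∫_ℝ C_n^{λ,β}(x) dπ_{λ,β}(x) = δ_{n,0}, where δ_{n,0} is the Kronecker delta (i.e. the integral equals 1 if n = 0 and 0 otherwise). -/

import Mathlib

/-!
Expanding the entire function `E_β` around `-λ` gives `∑ₖ (λᵏ/k!) E_β⁽ᵏ⁾(-λ) (1 + z)ᵏ = E_β(λz)`.
Dividing by `E_β(λz)` and differentiating `n` times at `z = 0`, the left-hand side becomes
`∑ₖ (λᵏ/k!) E_β⁽ᵏ⁾(-λ) Cₙ(k)`, while the right-hand side is the `n`-th derivative of `1`. By the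
Leibniz rule the termwise differentiation only involves the factorial moments
`∑ₖ (λᵏ/k!) E_β⁽ᵏ⁾(-λ) k(k-1)⋯(k-j+1) = λʲ E_β⁽ʲ⁾(0)`, which are Taylor series as well.

This sum is the integral once the weights are known to be nonnegative, i.e. once `x ↦ E_β(-x)` is
known to be completely monotone. As `E_β⁽ᵏ⁾(-x) = ∑ᵣ (-x)ʳ/r! m_{r+k}` with `m_i = i!/Γ(βi+1)`, it
suffices that the functional `uⁱ ↦ m_i` is nonnegative on polynomials that are nonnegative on
`[0, ∞)`: apply it to `uᵏ` times the truncations of even degree of the exponential series at `-xu`.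
By Euler's limit formula, `m_i = lim_N N^((1-β)i) ∏_{j ≤ N} (βi+1+j)/(i+1+j)`, and each factor is
the moment sequence of a probability law on `[0, 1]`. Positivity is preserved by products, since
these correspond to products of independent variables, and by pointwise limits.
-/

open MeasureTheory Finset
open scoped ENNReal NNReal

noncomputable section

/-- The complex Mittag-Leffler function `E_β(z) = ∑ zⁿ / Γ(βn+1)`. -/
def mittagLeffler (β : ℝ) (z : ℂ) : ℂ :=
  ∑' n : ℕ, z ^ n / (Complex.Gamma ((β * n + 1 : ℝ) : ℂ))

/-- The real Mittag-Leffler function `E_β(x) = ∑ xⁿ / Γ(βn+1)`. -/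
def mittagLefflerR (β : ℝ) (x : ℝ) : ℝ :=
  ∑' n : ℕ, x ^ n / Real.Gamma (β * n + 1)

/-- The fractional Poisson measure `π_{λ,β} = ∑_k (λᵏ/k!) E_β⁽ᵏ⁾(-λ) δ_k` on `ℝ`. -/
def fracPoisson (lam β : ℝ) : Measure ℝ :=
  Measure.sum fun k : ℕ =>
    ENNReal.ofReal (lam ^ k / k.factorial * iteratedDeriv k (mittagLefflerR β) (-lam)) •
      Measure.dirac (k : ℝ)

/-- The Poisson measure with rate `μ` on `ℝ`, `π_μ({k}) = (μᵏ/k!) e^{-μ}`. -/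
def poissonMeasureR (μ : ℝ) : Measure ℝ :=
  Measure.sum fun k : ℕ =>
    ENNReal.ofReal (μ ^ k / k.factorial * Real.exp (-μ)) • Measure.dirac (k : ℝ)

/-- The generalized Appell polynomials
`C_n^{λ,β}(x) = dⁿ/dzⁿ [e^{x log(1+z)} / E_β(λz)]` at `z = 0`. -/
def genAppell (lam β : ℝ) (n : ℕ) (x : ℂ) : ℂ :=
  iteratedDeriv n
    (fun z : ℂ => Complex.exp (x * Complex.log (1 + z)) / mittagLeffler β (lam * z)) 0

/-- The Appell polynomials `A_n^{λ,β}(x) = dⁿ/dzⁿ [e^{zx} / E_β(λ(eᶻ-1))]` at `z = 0`. -/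
def appell (lam β : ℝ) (n : ℕ) (x : ℂ) : ℂ :=
  iteratedDeriv n
    (fun z : ℂ => Complex.exp (z * x) / mittagLeffler β (lam * (Complex.exp z - 1))) 0

/-- Stirling numbers of the first kind, via `(log(1+z))^k = k! ∑_{n≥k} s(n,k) zⁿ/n!`. -/
def stirlingFst (n k : ℕ) : ℝ :=
  iteratedDeriv n (fun x : ℝ => (Real.log (1 + x)) ^ k) 0 / k.factorial

/-- Stirling numbers of the second kind, via `(eᶻ-1)^k = k! ∑_{n≥k} S(n,k) zⁿ/n!`. -/
def stirlingSnd (n k : ℕ) : ℝ :=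
  iteratedDeriv n (fun x : ℝ => (Real.exp x - 1) ^ k) 0 / k.factorial

/-- The `n`-th moment of the fractional Poisson measure. -/
def fpMoment (lam β : ℝ) (n : ℕ) : ℝ := ∫ x, x ^ n ∂(fracPoisson lam β)

/-- `M̃_{λ,β}(m) = m! λᵐ / Γ(mβ+1)`. -/
def tildeM (lam β : ℝ) (m : ℕ) : ℝ := m.factorial * lam ^ m / Real.Gamma (m * β + 1)

/-- The (partial exponential) Bell polynomials `B_{n,k}(x₁, …, x_{n-k+1})`. -/
def bellPoly (n k : ℕ) (x : ℕ → ℂ) : ℂ :=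
  ∑ j ∈ (Fintype.piFinset fun _ : Fin (n - k + 1) => Finset.range (n + 1)).filter
      (fun j => (∑ i, j i) = k ∧ (∑ i, (i.1 + 1) * j i) = n),
    (n.factorial : ℂ) / (∏ i, ((j i).factorial : ℂ)) *
      ∏ i, (x (i.1 + 1) / ((i.1 + 1).factorial : ℂ)) ^ j i

open Filter
open scoped Nat Topology

/-! ### Entire functions -/

section Entire

variable {f : ℂ → ℂ}

lemma differentiable_iteratedDeriv (hf : Differentiable ℂ f) (k : ℕ) :
    Differentiable ℂ (iteratedDeriv k f) :=
  hf.contDiff.differentiable_iteratedDeriv k (n := ⊤) (WithTop.coe_lt_top _)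

lemma iteratedDeriv_ofReal (hf : Differentiable ℂ f) {g : ℝ → ℝ} (hfg : ∀ x : ℝ, f x = g x)
    (k : ℕ) (x : ℝ) : iteratedDeriv k f x = iteratedDeriv k g x := by
  induction k generalizing x with
  | zero => simpa using hfg x
  | succ k ih =>
    have hD : HasDerivAt (iteratedDeriv k f) (iteratedDeriv (k + 1) f x) x := by
      rw [iteratedDeriv_succ]
      exact (differentiable_iteratedDeriv hf k x).hasDerivAt
    have hre : (fun y : ℝ => (iteratedDeriv k f y).re) = iteratedDeriv k g := by
      simp only [ih, Complex.ofReal_re]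
    have hg : DifferentiableAt ℝ (iteratedDeriv k g) x :=
      hre ▸ hD.real_of_complex.differentiableAt
    have hg' := hg.hasDerivAt.ofReal_comp
    simp only [← ih] at hg'
    rw [hD.comp_ofReal.unique hg', iteratedDeriv_succ]

lemma hasSum_iteratedDeriv_add (hf : Differentiable ℂ f) (k : ℕ) (c w : ℂ) :
    HasSum (fun r : ℕ => w ^ r / r ! * iteratedDeriv (r + k) f c)
      (iteratedDeriv k f (c + w)) := by
  refine (Complex.hasSum_taylorSeries_of_entire
    (differentiable_iteratedDeriv hf k) c (c + w)).congr_fun fun r => ?_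
  rw [iteratedDeriv_eq_iterate, iteratedDeriv_eq_iterate, iteratedDeriv_eq_iterate,
    Function.iterate_add_apply, add_sub_cancel_left, smul_eq_mul, smul_eq_mul]
  ring

lemma hasSum_descFactorial_mul_iteratedDeriv (hf : Differentiable ℂ f) (j : ℕ) (c w : ℂ) :
    HasSum (fun k : ℕ => w ^ k / k ! * iteratedDeriv k f c * k.descFactorial j)
      (w ^ j * iteratedDeriv j f (c + w)) := by
  have hlow : ∑ k ∈ range j, w ^ k / k ! * iteratedDeriv k f c * k.descFactorial j = 0 :=
    sum_eq_zero fun k hk => by rw [Nat.descFactorial_of_lt (mem_range.1 hk)]; simp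
  rw [← hasSum_nat_add_iff' j, hlow, sub_zero]
  refine ((hasSum_iteratedDeriv_add hf j c w).mul_left (w ^ j)).congr_fun fun k => ?_
  have hfact : (k ! : ℂ) * (k + j).descFactorial j = (k + j)! := by
    have := Nat.factorial_mul_descFactorial (n := k + j) (k := j) (Nat.le_add_left j k)
    rw [Nat.add_sub_cancel] at this
    exact_mod_cast this
  have hk : (k ! : ℂ) ≠ 0 := by exact_mod_cast k.factorial_ne_zero
  have hkj : ((k + j)! : ℂ) ≠ 0 := by exact_mod_cast (k + j).factorial_ne_zero
  field_simp
  rw [← hfact]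
  ring

end Entire

/-! ### Generating functions -/

section GeneratingFunction

variable {n : ℕ} {g : ℂ → ℂ}

lemma iteratedDeriv_exp_natCast_mul_log_mul (hg : ContDiffAt ℂ n g 0) (k : ℕ) :
    iteratedDeriv n (fun z => Complex.exp (k * Complex.log (1 + z)) * g z) 0 =
      ∑ j ∈ range (n + 1), n.choose j * k.descFactorial j * iteratedDeriv (n - j) g 0 := by
  have hpow : (fun z => Complex.exp (k * Complex.log (1 + z)) * g z) =ᶠ[𝓝 0]
      fun z => (1 + z) ^ k * g z := by
    have hne : ∀ᶠ z : ℂ in 𝓝 0, 1 + z ≠ 0 :=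
      (continuous_const_add (1 : ℂ)).continuousAt.eventually_ne (by simp)
    filter_upwards [hne] with z hz
    rw [Complex.exp_nat_mul, Complex.exp_log hz]
  rw [hpow.iteratedDeriv_eq, iteratedDeriv_fun_mul (by fun_prop) hg]
  simp [iteratedDeriv_comp_const_add (f := fun z : ℂ => z ^ k)]

/-- Formally, this is `∑ₖ wᵏ/k! f⁽ᵏ⁾(c) (1 + z)ᵏ = f (c + w (1 + z))`, multiplied by `g z` and
differentiated termwise. -/
lemma hasSum_iteratedDeriv_exp_natCast_mul_log_mul {f : ℂ → ℂ} (hf : Differentiable ℂ f)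
    (hg : ContDiffAt ℂ n g 0) (c w : ℂ) :
    HasSum
      (fun k : ℕ => w ^ k / k ! * iteratedDeriv k f c *
        iteratedDeriv n (fun z => Complex.exp (k * Complex.log (1 + z)) * g z) 0)
      (iteratedDeriv n (fun z => f (c + w + w * z) * g z) 0) := by
  have hfc (m : ℕ) : ContDiff ℂ m fun z => f (c + w + z) :=
    hf.contDiff.comp (contDiff_const.add contDiff_id)
  rw [iteratedDeriv_fun_mul (f := fun z => f (c + w + w * z))
    ((hfc n).comp (contDiff_const.mul contDiff_id)).contDiffAt hg]
  have hterm : ∀ j ∈ range (n + 1),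
      HasSum
        (fun k : ℕ => n.choose j * (w ^ k / k ! * iteratedDeriv k f c * k.descFactorial j) *
          iteratedDeriv (n - j) g 0)
        (n.choose j * iteratedDeriv j (fun z => f (c + w + w * z)) 0 *
          iteratedDeriv (n - j) g 0) := by
    intro j _
    rw [iteratedDeriv_comp_const_mul (hfc j), iteratedDeriv_comp_const_add]
    simpa using ((hasSum_descFactorial_mul_iteratedDeriv hf j c w).mul_left _).mul_right _
  refine (hasSum_sum hterm).congr_fun fun k => ?_
  rw [iteratedDeriv_exp_natCast_mul_log_mul hg, mul_sum]
  exact sum_congr rfl fun j _ => by ring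

end GeneratingFunction

/-! ### The Mittag-Leffler function is entire -/

lemma rpow_mul_exp_neg_le_Gamma {M y : ℝ} (hM : 0 ≤ M) (hy : 0 ≤ y) :
    M ^ y * Real.exp (-M) ≤ Real.Gamma (y + 1) := by
  have hΓ : IntegrableOn (fun t => Real.exp (-t) * t ^ (y + 1 - 1)) (Set.Ioi 0) :=
    Real.GammaIntegral_convergent (by positivity)
  have hsub : Set.Ioi M ⊆ Set.Ioi 0 := Set.Ioi_subset_Ioi hM
  calc M ^ y * Real.exp (-M) = ∫ t in Set.Ioi M, M ^ y * Real.exp (-t) := by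
        rw [integral_const_mul, integral_exp_neg_Ioi]
    _ ≤ ∫ t in Set.Ioi M, Real.exp (-t) * t ^ (y + 1 - 1) := by
        refine setIntegral_mono_on ((integrableOn_exp_neg_Ioi M).const_mul _)
          (hΓ.mono_set hsub) measurableSet_Ioi fun t ht => ?_
        rw [mul_comm, add_sub_cancel_right]
        have : M ≤ t := (Set.mem_Ioi.1 ht).le
        gcongr
    _ ≤ ∫ t in Set.Ioi 0, Real.exp (-t) * t ^ (y + 1 - 1) := by
        refine setIntegral_mono_set hΓ ?_ hsub.eventuallyLE
        filter_upwards [ae_restrict_mem measurableSet_Ioi] with t ht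
        have : 0 < t := ht
        simp only [Pi.zero_apply]
        positivity
    _ = Real.Gamma (y + 1) := (Real.Gamma_eq_integral (by positivity)).symm

section MittagLeffler

variable {β : ℝ}

/-- The Mittag-Leffler series, as a formal power series. -/
def mittagLefflerSeries (β : ℝ) : FormalMultilinearSeries ℂ ℂ ℂ :=
  .ofScalars ℂ fun n : ℕ => (((Real.Gamma (β * n + 1))⁻¹ : ℝ) : ℂ)

lemma mittagLefflerSeries_sum (β : ℝ) : (mittagLefflerSeries β).sum = mittagLeffler β := by
  funext z
  refine (FormalMultilinearSeries.ofScalars_sum_eq _ z).trans (tsum_congr fun n => ?_)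
  rw [Complex.Gamma_ofReal, Complex.ofReal_inv, smul_eq_mul, div_eq_inv_mul]

lemma mittagLefflerSeries_radius (hβ : 0 < β) : (mittagLefflerSeries β).radius = ⊤ := by
  refine ENNReal.eq_top_of_forall_nnreal_le fun r => ?_
  -- `M` solves `M ^ β = r`.
  set M : ℝ := (r : ℝ) ^ β⁻¹ with hM
  refine FormalMultilinearSeries.le_radius_of_bound _ (Real.exp M) fun n => ?_
  have hβn : 0 ≤ β * n := by positivity
  have hΓ : 0 < Real.Gamma (β * n + 1) := Real.Gamma_pos_of_pos (by positivity)
  have hMr : M ^ (β * n) = (r : ℝ) ^ n := by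
    rw [Real.rpow_mul (by positivity), hM, Real.rpow_inv_rpow r.coe_nonneg hβ.ne',
      Real.rpow_natCast]
  have hle : (r : ℝ) ^ n ≤ Real.exp M * Real.Gamma (β * n + 1) := by
    have := rpow_mul_exp_neg_le_Gamma (M := M) (by positivity) hβn
    rwa [hMr, Real.exp_neg, ← div_eq_mul_inv, div_le_iff₀' (Real.exp_pos M)] at this
  rw [mittagLefflerSeries, FormalMultilinearSeries.ofScalars_norm, Complex.norm_real,
    Real.norm_of_nonneg (by positivity), inv_mul_le_iff₀' hΓ]
  exact hle

lemma hasFPowerSeriesOnBall_mittagLeffler (hβ : 0 < β) :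
    HasFPowerSeriesOnBall (mittagLeffler β) (mittagLefflerSeries β) 0 ⊤ := by
  have hr := mittagLefflerSeries_radius hβ
  have := (mittagLefflerSeries β).hasFPowerSeriesOnBall (by simp [hr])
  rwa [hr, mittagLefflerSeries_sum] at this

lemma differentiable_mittagLeffler (hβ : 0 < β) : Differentiable ℂ (mittagLeffler β) := by
  have := (hasFPowerSeriesOnBall_mittagLeffler hβ).differentiableOn
  rwa [Metric.eball_top, differentiableOn_univ] at this

lemma iteratedDeriv_mittagLeffler_zero (hβ : 0 < β) (n : ℕ) :
    iteratedDeriv n (mittagLeffler β) 0 = ((n ! / Real.Gamma (β * n + 1) : ℝ) : ℂ) := by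
  have := (hasFPowerSeriesOnBall_mittagLeffler hβ).factorial_smul 1 n
  rw [← iteratedDeriv_eq_iteratedFDeriv, mittagLefflerSeries,
    FormalMultilinearSeries.ofScalars_apply_eq] at this
  simp [← this, div_eq_mul_inv]

lemma mittagLeffler_zero (hβ : 0 < β) : mittagLeffler β 0 = 1 := by
  simpa using iteratedDeriv_mittagLeffler_zero hβ 0

lemma mittagLeffler_ofReal (β x : ℝ) : mittagLeffler β x = mittagLefflerR β x := by
  rw [mittagLeffler, mittagLefflerR, Complex.ofReal_tsum]
  refine tsum_congr fun n => ?_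
  rw [Complex.Gamma_ofReal, Complex.ofReal_div, Complex.ofReal_pow]

lemma hasSum_iteratedDeriv_mittagLefflerR (hβ : 0 < β) (k : ℕ) (x : ℝ) :
    HasSum (fun r : ℕ => x ^ r / r ! * ((r + k)! / Real.Gamma (β * (r + k : ℕ) + 1)))
      (iteratedDeriv k (mittagLefflerR β) x) := by
  have hd := differentiable_mittagLeffler hβ
  rw [← Complex.hasSum_ofReal, ← iteratedDeriv_ofReal hd (mittagLeffler_ofReal β)]
  have := hasSum_iteratedDeriv_add hd k 0 x
  simp only [iteratedDeriv_mittagLeffler_zero hβ, zero_add] at this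
  exact_mod_cast this

end MittagLeffler

/-! ### Stieltjes moment sequences -/

/-- Positivity of the functional `xⁱ ↦ a i` on polynomials that are nonnegative on `[0, ∞)`: by
M. Riesz' criterion, `a` is the moment sequence of a measure on `[0, ∞)`. A polynomial is encoded
by a finite set of exponents and a coefficient function. -/
def StieltjesPositive (a : ℕ → ℝ) : Prop :=
  ∀ (s : Finset ℕ) (c : ℕ → ℝ), (∀ x : ℝ, 0 ≤ x → 0 ≤ ∑ i ∈ s, c i * x ^ i) →
    0 ≤ ∑ i ∈ s, c i * a i

lemma stieltjesPositive_moment {μ : Measure ℝ} (hμ : ∀ᵐ x ∂μ, 0 ≤ x)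
    (hint : ∀ i : ℕ, Integrable (fun x => x ^ i) μ) :
    StieltjesPositive fun i => ∫ x, x ^ i ∂μ := fun s c hc =>
  calc 0 ≤ ∫ x, ∑ i ∈ s, c i * x ^ i ∂μ := integral_nonneg_of_ae (hμ.mono hc)
    _ = ∑ i ∈ s, c i * ∫ x, x ^ i ∂μ := by
      rw [integral_finsetSum _ fun i _ => (hint i).const_mul (c i)]
      simp only [integral_const_mul]

lemma stieltjesPositive_pow {t : ℝ} (ht : 0 ≤ t) : StieltjesPositive fun i => t ^ i :=
  fun _ _ hc => hc t ht

lemma stieltjesPositive_inv_add_one : StieltjesPositive fun i => ((i : ℝ) + 1)⁻¹ := by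
  have hunit : ∀ i : ℕ, ∫ u in Set.Ioc (0 : ℝ) 1, u ^ i = ((i : ℝ) + 1)⁻¹ := fun i => by
    rw [← intervalIntegral.integral_of_le zero_le_one, integral_pow]
    simp
  simp only [← hunit]
  refine stieltjesPositive_moment ?_ fun i => ?_
  · filter_upwards [ae_restrict_mem measurableSet_Ioc] with u hu using hu.1.le
  · exact (continuous_pow i).integrableOn_Ioc

namespace StieltjesPositive

variable {a b : ℕ → ℝ}

lemma add (ha : StieltjesPositive a) (hb : StieltjesPositive b) :
    StieltjesPositive fun i => a i + b i := fun s c hc => by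
  simpa only [mul_add, sum_add_distrib] using add_nonneg (ha s c hc) (hb s c hc)

lemma const_mul (ha : StieltjesPositive a) {t : ℝ} (ht : 0 ≤ t) :
    StieltjesPositive fun i => t * a i := fun s c hc => by
  simpa only [mul_sum, mul_left_comm] using mul_nonneg ht (ha s c hc)

/-- For moments of `X` and `Y`, this is the product of independent copies: if `p ≥ 0` on `[0, ∞)`,
then so is `x ↦ 𝔼 p(xY)`. -/
lemma mul (ha : StieltjesPositive a) (hb : StieltjesPositive b) :
    StieltjesPositive fun i => a i * b i := fun s c hc => by
  have hcb : ∀ x : ℝ, 0 ≤ x → 0 ≤ ∑ i ∈ s, c i * b i * x ^ i := fun x hx => by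
    have := hb s (fun i => c i * x ^ i) fun y hy => by
      simpa only [mul_pow, mul_assoc] using hc (x * y) (mul_nonneg hx hy)
    simpa only [mul_right_comm] using this
  simpa only [mul_assoc, mul_comm (b _)] using ha s (fun i => c i * b i) hcb

lemma prod {ι : Type*} {A : ι → ℕ → ℝ} (t : Finset ι) (hA : ∀ j ∈ t, StieltjesPositive (A j)) :
    StieltjesPositive fun i => ∏ j ∈ t, A j i := by
  classical
  induction t using Finset.induction_on with
  | empty => simpa using stieltjesPositive_pow zero_le_one
  | insert j t hj ih =>
    simp only [prod_insert hj]
    exact (hA j (mem_insert_self j t)).mul (ih fun k hk => hA k (mem_insert_of_mem hk))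

lemma comp_add (ha : StieltjesPositive a) (k : ℕ) :
    StieltjesPositive fun i => a (i + k) := fun s c hc => by
  have := ha (s.map (addRightEmbedding k)) (fun i => c (i - k)) fun x hx => by
    have hxk : ∑ i ∈ s, c i * x ^ (i + k) = x ^ k * ∑ i ∈ s, c i * x ^ i := by
      rw [mul_sum]
      exact sum_congr rfl fun i _ => by ring
    simpa [hxk] using mul_nonneg (pow_nonneg hx k) (hc x hx)
  simpa using this

lemma of_tendsto {ι : Type*} {l : Filter ι} [l.NeBot] {A : ι → ℕ → ℝ}
    (hA : ∀ j, StieltjesPositive (A j)) (hlim : ∀ i, Tendsto (fun j => A j i) l (𝓝 (a i))) :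
    StieltjesPositive a := fun s c hc =>
  ge_of_tendsto' (tendsto_finsetSum s fun i _ => (hlim i).const_mul (c i)) fun j => hA j s c hc

end StieltjesPositive

lemma hasDerivAt_exp_mul_sum_range (n : ℕ) (y : ℝ) :
    HasDerivAt (fun y => Real.exp y * ∑ r ∈ range (n + 1), (-y) ^ r / r !)
      (Real.exp y * ((-y) ^ n / n !)) y := by
  induction n with
  | zero => simpa using Real.hasDerivAt_exp y
  | succ n ih =>
    have hterm : HasDerivAt (fun y : ℝ => (-y) ^ (n + 1) / (n + 1)!) (-((-y) ^ n / n !)) y := by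
      refine (((hasDerivAt_neg y).pow (n + 1)).div_const _).congr_deriv ?_
      rw [Nat.factorial_succ]
      push_cast
      field_simp
    have := ih.add ((Real.hasDerivAt_exp y).mul hterm)
    simp only [sum_range_succ _ (n + 1), mul_add]
    exact this.congr_deriv (by ring)

lemma sum_range_neg_pow_div_factorial_nonneg {n : ℕ} (hn : Even n) {y : ℝ} (hy : 0 ≤ y) :
    0 ≤ ∑ r ∈ range (n + 1), (-y) ^ r / r ! := by
  have hmono : Monotone fun y : ℝ => Real.exp y * ∑ r ∈ range (n + 1), (-y) ^ r / r ! :=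
    monotone_of_hasDerivAt_nonneg (hasDerivAt_exp_mul_sum_range n) fun y =>
      mul_nonneg (Real.exp_pos y).le (div_nonneg (hn.pow_nonneg _) (by positivity))
  have h0 : Real.exp 0 * ∑ r ∈ range (n + 1), (-0 : ℝ) ^ r / r ! = 1 := by
    simp [sum_range_succ']
  exact nonneg_of_mul_nonneg_right (zero_le_one.trans (h0.symm.trans_le (hmono hy)))
    (Real.exp_pos y)

/-- The sum is the Laplace transform at `x` of a measure with moments `a`. -/
lemma StieltjesPositive.hasSum_nonneg {a : ℕ → ℝ} (ha : StieltjesPositive a) {x S : ℝ}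
    (hx : 0 ≤ x) (hS : HasSum (fun r : ℕ => (-x) ^ r / r ! * a r) S) : 0 ≤ S := by
  have heven : Tendsto (fun J : ℕ => 2 * J + 1) atTop atTop :=
    tendsto_atTop_mono (fun J => by simp only [id]; omega) tendsto_id
  refine ge_of_tendsto' (hS.tendsto_sum_nat.comp heven) fun J => ?_
  refine ha (range (2 * J + 1)) (fun r => (-x) ^ r / r !) fun u hu => ?_
  have := sum_range_neg_pow_div_factorial_nonneg (even_two_mul J) (mul_nonneg hx hu)
  simpa only [← neg_mul, mul_pow, div_mul_eq_mul_div] using this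

/-! ### Complete monotonicity of the Mittag-Leffler function -/

lemma GammaSeq_div_GammaSeq (s t : ℝ) {n : ℕ} (hn : n ≠ 0) :
    Real.GammaSeq s n / Real.GammaSeq t n =
      (n : ℝ) ^ (s - t) * ∏ j ∈ range (n + 1), (t + j) / (s + j) := by
  have hn' : (0 : ℝ) < n := by positivity
  have hpow : (n : ℝ) ^ s = (n : ℝ) ^ (s - t) * (n : ℝ) ^ t := by
    rw [← Real.rpow_add hn', sub_add_cancel]
  rw [Real.GammaSeq, Real.GammaSeq, prod_div_distrib, hpow, div_div_div_eq]
  field_simp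

/-- These are the moments of the law `β δ₁ + (1 - β) (j + 1) uʲ du` on `[0, 1]`. -/
lemma stieltjesPositive_add_div_add {β : ℝ} (hβ0 : 0 ≤ β) (hβ1 : β ≤ 1) (j : ℕ) :
    StieltjesPositive fun i => (β * i + 1 + j) / (i + 1 + j) := by
  have hmix := ((stieltjesPositive_pow zero_le_one).const_mul hβ0).add
    ((stieltjesPositive_inv_add_one.comp_add j).const_mul
      (mul_nonneg (sub_nonneg.2 hβ1) (by positivity : (0 : ℝ) ≤ j + 1)))
  convert hmix using 2 with i
  push_cast
  have : (i : ℝ) + j + 1 ≠ 0 := by positivity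
  have : (i : ℝ) + 1 + j ≠ 0 := by positivity
  field_simp
  ring

lemma stieltjesPositive_factorial_div_Gamma {β : ℝ} (hβ0 : 0 ≤ β) (hβ1 : β ≤ 1) :
    StieltjesPositive fun i => i ! / Real.Gamma (β * i + 1) := by
  refine StieltjesPositive.of_tendsto (l := atTop)
    (A := fun (n i : ℕ) => ((n : ℝ) ^ (1 - β)) ^ i *
      ∏ j ∈ range (n + 1), (β * i + 1 + j) / (i + 1 + j)) (fun n => ?_) fun i => ?_
  · exact (stieltjesPositive_pow (by positivity)).mul
      (.prod _ fun j _ => stieltjesPositive_add_div_add hβ0 hβ1 j)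
  · have hΓ : Real.Gamma (β * i + 1) ≠ 0 := (Real.Gamma_pos_of_pos (by positivity)).ne'
    have hEuler := (Real.GammaSeq_tendsto_Gamma (i + 1)).div
      (Real.GammaSeq_tendsto_Gamma (β * i + 1)) hΓ
    rw [Real.Gamma_nat_eq_factorial] at hEuler
    refine hEuler.congr' ?_
    filter_upwards [eventually_ne_atTop 0] with n hn
    rw [Pi.div_apply, GammaSeq_div_GammaSeq _ _ hn, ← Real.rpow_natCast,
      ← Real.rpow_mul n.cast_nonneg]
    ring_nf

lemma iteratedDeriv_mittagLefflerR_nonneg {β : ℝ} (hβ0 : 0 < β) (hβ1 : β ≤ 1) (k : ℕ) {x : ℝ}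
    (hx : x ≤ 0) : 0 ≤ iteratedDeriv k (mittagLefflerR β) x := by
  have hsum := hasSum_iteratedDeriv_mittagLefflerR hβ0 k x
  rw [← neg_neg x] at hsum ⊢
  exact ((stieltjesPositive_factorial_div_Gamma hβ0.le hβ1).comp_add k).hasSum_nonneg
    (neg_nonneg.2 hx) hsum

/-! ### Integration against the fractional Poisson measure -/

section FracPoisson

variable {lam β : ℝ}

/-- The weight `(λᵏ/k!) E_β⁽ᵏ⁾(-λ)` of the fractional Poisson measure at `k`. -/
def fracPoissonWeight (lam β : ℝ) (k : ℕ) : ℝ :=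
  lam ^ k / k ! * iteratedDeriv k (mittagLefflerR β) (-lam)

lemma fracPoissonWeight_nonneg (hlam : 0 ≤ lam) (hβ0 : 0 < β) (hβ1 : β ≤ 1) (k : ℕ) :
    0 ≤ fracPoissonWeight lam β k :=
  mul_nonneg (by positivity)
    (iteratedDeriv_mittagLefflerR_nonneg hβ0 hβ1 k (neg_nonpos.2 hlam))

lemma ofReal_fracPoissonWeight (lam : ℝ) (hβ : 0 < β) (k : ℕ) :
    (fracPoissonWeight lam β k : ℂ) =
      (lam : ℂ) ^ k / k ! * iteratedDeriv k (mittagLeffler β) (-lam : ℂ) := by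
  rw [fracPoissonWeight, ← Complex.ofReal_neg,
    iteratedDeriv_ofReal (differentiable_mittagLeffler hβ) (mittagLeffler_ofReal β)]
  push_cast
  rfl

lemma integral_fracPoisson_eq_of_hasSum (hw : ∀ k, 0 ≤ fracPoissonWeight lam β k) {F : ℝ → ℂ}
    {S : ℂ} (hF : HasSum (fun k : ℕ => fracPoissonWeight lam β k * F k) S) :
    ∫ x, F x ∂(fracPoisson lam β) = S := by
  have htoReal : ∀ k, (ENNReal.ofReal (fracPoissonWeight lam β k)).toReal =
      fracPoissonWeight lam β k := fun k => ENNReal.toReal_ofReal (hw k)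
  have hint := hasSum_integral_sum_dirac (x := fun k : ℕ => (k : ℝ)) (f := F)
    (c := fun k => ENNReal.ofReal (fracPoissonWeight lam β k)) (by simp) <| by
      refine hF.summable.norm.congr fun k => ?_
      rw [htoReal, norm_mul, Complex.norm_of_nonneg (hw k)]
  simp only [htoReal, Complex.real_smul] at hint
  exact hint.unique hF

lemma hasSum_fracPoissonWeight_mul_genAppell (lam : ℝ) (hβ : 0 < β) (n : ℕ) :
    HasSum (fun k : ℕ => fracPoissonWeight lam β k * genAppell lam β n k)
      (if n = 0 then 1 else 0) := by
  have hd : Differentiable ℂ (mittagLeffler β) := differentiable_mittagLeffler hβ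
  have hE : ContDiff ℂ n fun z : ℂ => mittagLeffler β (lam * z) :=
    hd.contDiff.comp (contDiff_const.mul contDiff_id)
  have hE0 : mittagLeffler β (lam * 0) ≠ 0 := by simp [mittagLeffler_zero hβ]
  have hone : (fun z : ℂ => mittagLeffler β (lam * z) * (mittagLeffler β (lam * z))⁻¹)
      =ᶠ[𝓝 0] fun _ => 1 :=
    (hE.continuous.continuousAt.eventually_ne hE0).mono fun z hz => mul_inv_cancel₀ hz
  have hsum := hasSum_iteratedDeriv_exp_natCast_mul_log_mul hd
    (g := fun z : ℂ => (mittagLeffler β (lam * z))⁻¹) (hE.contDiffAt.inv hE0) (-lam) lam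
  simp only [neg_add_cancel, zero_add] at hsum
  rw [hone.iteratedDeriv_eq, iteratedDeriv_const] at hsum
  simpa only [ofReal_fracPoissonWeight lam hβ, genAppell, div_eq_mul_inv] using hsum

end FracPoisson

theorem stmt8 (lam β : ℝ) (hlam : 0 < lam) (hβ0 : 0 < β) (hβ1 : β ≤ 1) (n : ℕ) :
    (∫ x : ℝ, genAppell lam β n x ∂(fracPoisson lam β)) =
      if n = 0 then 1 else 0 :=
  integral_fracPoisson_eq_of_hasSum (F := fun x => genAppell lam β n x)
    (fracPoissonWeight_nonneg hlam.le hβ0 hβ1)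
    (by exact_mod_cast hasSum_fracPoissonWeight_mul_genAppell lam hβ0 n)
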